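/- Let β > 1 and let (λ_k)_{k≥1} be a sequence of positive reals with c₁ k^{−β} ≤ λ_k ≤ c₂ k^{−β} for all k ≥ 1 and some constants 0 < c₁ ≤ c₂. For a real m ≥ 1 define df_m(κ) := Σ_{k=1}^∞ λ_k^m / (λ_k + κ)^m for κ > 0. Then there exist constants 0 < A ≤ B and κ₀ > 0 such that A κ^{−1/β} ≤ df_m(κ) ≤ B κ^{−1/β} for all 0 < κ ≤ κ₀. -/

import Mathlib

noncomputable section

/-!
Put `x = κ^{-1/β}`, the index scale at which `k^{-β}` crosses `κ`, and `N = ⌊x⌋`; for `κ ≤ 1`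
one has `x ≥ 1`, hence `x / 2 ≤ N ≤ x`.

* Lower bound: each of the first `N` eigenvalues is at least `c₁ κ`, so each of the first `N`
  terms is at least `(c₁ / (c₁ + 1))^m`.
* Upper bound: the first `N` terms are at most `1`, and since `m ≥ 1` the others are at most
  `λ_k / κ ≤ c₂ k^{-β} / κ`. The tail `∑_{k > N} k^{-β}` is controlled by `N^{1-β} / (β - 1)`
  through the telescoping inequality `rpow_neg_telescope`, and `x^{1-β} / κ = x`.
-/

/-- The discrete form of `∫_{t-1}^t u^{-s-1} du ≥ t^{-s-1}`, with `t = y + 1`. -/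
lemma rpow_neg_telescope {s y : ℝ} (hs : 0 < s) (hy : 0 < y) :
    s * (y + 1) ^ (-(s + 1)) ≤ y ^ (-s) - (y + 1) ^ (-s) := by
  have hy1 : 0 < y + 1 := by linarith
  -- `log (y / (y + 1)) ≤ -1 / (y + 1)` and `exp z ≥ 1 + z` give a Bernoulli inequality.
  have hlog : Real.log (y / (y + 1)) ≤ -(1 / (y + 1)) := by
    have := Real.log_le_sub_one_of_pos (div_pos hy hy1)
    have e : y / (y + 1) - 1 = -(1 / (y + 1)) := by field_simp; ring
    linarith
  have hb : 1 + s * (1 / (y + 1)) ≤ (y / (y + 1)) ^ (-s) := by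
    rw [Real.rpow_def_of_pos (div_pos hy hy1)]
    have := Real.add_one_le_exp (Real.log (y / (y + 1)) * -s)
    nlinarith
  rw [Real.div_rpow hy.le hy1.le] at hb
  have hp : 0 < (y + 1) ^ (-s) := Real.rpow_pos_of_pos hy1 _
  rw [le_div_iff₀ hp] at hb
  have e : (y + 1) ^ (-(s + 1)) = (y + 1) ^ (-s) * (1 / (y + 1)) := by
    rw [show -(s + 1) = -s - 1 by ring, Real.rpow_sub_one hy1.ne', mul_one_div]
  rw [e]
  linarith

/-- Partial sums of a sequence bounded by `1` and by `C (k + 1)^{-(s + 1)}`: the first bound is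
used below index `N`, the second one, telescoped, from `N` on. -/
lemma sum_range_le_of_decay {s C : ℝ} (hs : 0 < s) (hC : 0 ≤ C) {f : ℕ → ℝ}
    (hf0 : ∀ k, 0 ≤ f k) (hf1 : ∀ k, f k ≤ 1)
    (hf : ∀ k : ℕ, f k ≤ C * ((k : ℝ) + 1) ^ (-(s + 1))) {N : ℕ} (hN : 0 < N) (n : ℕ) :
    ∑ k ∈ Finset.range n, f k ≤ N + C / s * (N : ℝ) ^ (-s) := by
  have key : ∀ n : ℕ, ∑ k ∈ Finset.range (N + n), f k ≤
      N + C / s * ((N : ℝ) ^ (-s) - ((N : ℝ) + n) ^ (-s)) := by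
    intro n
    induction n with
    | zero =>
      simpa using Finset.sum_le_card_nsmul (Finset.range N) f 1 (fun k _ => hf1 k)
    | succ n ih =>
      rw [← add_assoc, Finset.sum_range_succ]
      have hy : (0 : ℝ) < (N : ℝ) + n := by positivity
      have h1 := hf (N + n)
      have h2 := mul_le_mul_of_nonneg_left (rpow_neg_telescope hs hy) (div_nonneg hC hs.le)
      rw [← mul_assoc, div_mul_cancel₀ _ hs.ne'] at h2
      push_cast at h1 ⊢
      rw [← add_assoc]
      linarith
  have h0 : 0 ≤ C / s * ((N : ℝ) + n) ^ (-s) := by positivity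
  calc ∑ k ∈ Finset.range n, f k ≤ ∑ k ∈ Finset.range (N + n), f k :=
        Finset.sum_le_sum_of_subset_of_nonneg
          (Finset.range_subset_range.2 (by omega)) (fun k _ _ => hf0 k)
    _ ≤ _ := key n
    _ ≤ _ := by linarith

/-- For a power-law spectrum `λ_k ≍ k^{−β}` with `β > 1`
(here indexed so that `lam k = λ_{k+1}`) and a real `m ≥ 1`, the degrees-of-freedom
functional `df_m(κ) := ∑_{k≥1} λ_k^m / (λ_k + κ)^m` satisfies
`df_m(κ) ≍ κ^{−1/β}` as `κ → 0⁺`. -/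
theorem powerLaw_df_asymptotics (β : ℝ) (hβ : 1 < β)
    (lam : ℕ → ℝ) (hpos : ∀ k, 0 < lam k)
    (c₁ c₂ : ℝ) (hc₁ : 0 < c₁) (hc₁₂ : c₁ ≤ c₂)
    (hlow : ∀ k : ℕ, c₁ * ((k : ℝ) + 1) ^ (-β) ≤ lam k)
    (hhigh : ∀ k : ℕ, lam k ≤ c₂ * ((k : ℝ) + 1) ^ (-β))
    (m : ℝ) (hm : 1 ≤ m) :
    let df : ℝ → ℝ := fun κ => ∑' k : ℕ, lam k ^ m / (lam k + κ) ^ m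
    ∃ A B κ₀ : ℝ, 0 < A ∧ A ≤ B ∧ 0 < κ₀ ∧
      ∀ κ : ℝ, 0 < κ → κ ≤ κ₀ →
        A * κ ^ (-(1 / β)) ≤ df κ ∧ df κ ≤ B * κ ^ (-(1 / β)) := by
  intro df
  have hs : 0 < β - 1 := by linarith
  have hc₂ : 0 < c₂ := by linarith
  have hA : 0 < (c₁ / (c₁ + 1)) ^ m := by positivity
  refine ⟨(c₁ / (c₁ + 1)) ^ m / 2,
    max ((c₁ / (c₁ + 1)) ^ m / 2) (1 + c₂ / (β - 1) * 2 ^ (β - 1)), 1,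
    by positivity, le_max_left _ _, one_pos, ?_⟩
  intro κ hκ hκ1
  obtain ⟨x, hx⟩ : ∃ x, x = κ ^ (-(1 / β)) := ⟨_, rfl⟩
  rw [← hx]
  have hx1 : 1 ≤ x := by
    rw [hx]
    exact Real.one_le_rpow_of_pos_of_le_one_of_nonpos hκ hκ1
      (by simp only [Left.neg_nonpos_iff]; positivity)
  have hx0 : 0 < x := by linarith
  have hxκ : x ^ (-β) = κ := by
    rw [hx, ← Real.rpow_mul hκ.le]
    have : -(1 / β) * -β = 1 := by field_simp
    rw [this, Real.rpow_one]
  obtain ⟨N, hNdef⟩ : ∃ N, N = ⌊x⌋₊ := ⟨_, rfl⟩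
  have hN : 0 < N := by rw [hNdef]; exact Nat.floor_pos.2 hx1
  have hNx : (N : ℝ) ≤ x := by rw [hNdef]; exact Nat.floor_le hx0.le
  have hxN : x / 2 ≤ N := by
    have h1 : x < N + 1 := by rw [hNdef]; exact Nat.lt_floor_add_one x
    have h2 : (1 : ℝ) ≤ N := by exact_mod_cast hN
    linarith
  have hdf : df κ = ∑' k : ℕ, (lam k / (lam k + κ)) ^ m := by
    refine tsum_congr fun k => ?_
    rw [Real.div_rpow (hpos k).le (add_pos (hpos k) hκ).le]
  have hr0 : ∀ k, 0 < lam k / (lam k + κ) := fun k => div_pos (hpos k) (add_pos (hpos k) hκ)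
  have hr1 : ∀ k, lam k / (lam k + κ) ≤ 1 := fun k =>
    (div_le_one (add_pos (hpos k) hκ)).2 (by linarith)
  have hf0 : ∀ k, 0 ≤ (lam k / (lam k + κ)) ^ m := fun k => Real.rpow_nonneg (hr0 k).le _
  have hf1 : ∀ k, (lam k / (lam k + κ)) ^ m ≤ 1 := fun k =>
    Real.rpow_le_one (hr0 k).le (hr1 k) (by linarith)
  have hf : ∀ k : ℕ, (lam k / (lam k + κ)) ^ m ≤
      c₂ / κ * ((k : ℝ) + 1) ^ (-((β - 1) + 1)) := by
    intro k
    rw [sub_add_cancel]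
    calc (lam k / (lam k + κ)) ^ m ≤ lam k / (lam k + κ) :=
          Real.rpow_le_self_of_le_one (hr0 k).le (hr1 k) hm
      _ ≤ lam k / κ :=
          div_le_div_of_nonneg_left (hpos k).le hκ (by linarith [hpos k])
      _ ≤ c₂ * ((k : ℝ) + 1) ^ (-β) / κ := div_le_div_of_nonneg_right (hhigh k) hκ.le
      _ = _ := by ring
  have hsum := sum_range_le_of_decay hs (div_pos hc₂ hκ).le hf0 hf1 hf hN
  rw [hdf]
  constructor
  · have hS : Summable fun k => (lam k / (lam k + κ)) ^ m := summable_of_sum_range_le hf0 hsum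
    have hterm : ∀ k ∈ Finset.range N,
        (c₁ / (c₁ + 1)) ^ m ≤ (lam k / (lam k + κ)) ^ m := by
      intro k hk
      have hkx : (k : ℝ) + 1 ≤ x := by
        have : ((k + 1 : ℕ) : ℝ) ≤ N := by exact_mod_cast Finset.mem_range.1 hk
        push_cast at this
        linarith
      have h1 : κ ≤ ((k : ℝ) + 1) ^ (-β) := by
        rw [← hxκ]
        exact Real.rpow_le_rpow_of_nonpos (by positivity) hkx (by linarith)
      have h2 : c₁ * κ ≤ lam k := (mul_le_mul_of_nonneg_left h1 hc₁.le).trans (hlow k)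
      refine Real.rpow_le_rpow (by positivity) ?_ (by linarith)
      rw [div_le_div_iff₀ (by linarith) (add_pos (hpos k) hκ)]
      linarith
    have h3 := Finset.card_nsmul_le_sum _ _ _ hterm
    rw [Finset.card_range, nsmul_eq_mul] at h3
    have h4 := hS.sum_le_tsum (Finset.range N) (fun k _ => hf0 k)
    have h5 := mul_le_mul_of_nonneg_right hxN hA.le
    linarith
  · refine (Real.tsum_le_of_sum_range_le hf0 hsum).trans ?_
    have h1 : (N : ℝ) ^ (-(β - 1)) ≤ (x / 2) ^ (-(β - 1)) :=
      Real.rpow_le_rpow_of_nonpos (by positivity) hxN (by linarith)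
    have h2 : (x / 2) ^ (-(β - 1)) = x * κ * 2 ^ (β - 1) := by
      rw [Real.div_rpow hx0.le zero_le_two, Real.rpow_neg zero_le_two, div_inv_eq_mul,
        show -(β - 1) = 1 + -β by ring, Real.rpow_add hx0, Real.rpow_one, hxκ]
    rw [h2] at h1
    have h3 := mul_le_mul_of_nonneg_left h1 (div_pos (div_pos hc₂ hκ) hs).le
    have h4 : c₂ / κ / (β - 1) * (x * κ * 2 ^ (β - 1)) =
        c₂ / (β - 1) * 2 ^ (β - 1) * x := by
      field_simp
    have h5 := mul_le_mul_of_nonneg_right (le_max_right ((c₁ / (c₁ + 1)) ^ m / 2)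
      (1 + c₂ / (β - 1) * 2 ^ (β - 1))) hx0.le
    linarith

end
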